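/- Let Φ be an irreducible crystallographic root system of rank n with affine Weyl group W. If W = ⟨s_{α_1,l_1},…,s_{α_{n−1},l_{n−1}}, s_{α_n,l_n}, s_{α_n,l_{n+1}}⟩ for roots α_1,…,α_n ∈ Φ and integers l_1,…,l_{n+1} ∈ ℤ, then |l_{n+1} − l_n| = 1, and if Φ is not simply-laced then α_n is a long root. -/

import Mathlib

open scoped RealInnerProductSpace

noncomputable section

variable {V : Type*} [NormedAddCommGroup V] [InnerProductSpace ℝ V]

/-- The coroot `α^∨ = 2α/(α|α)` of a vector `α`. -/
def coroot (α : V) : V := (2 / ⟪α, α⟫) • α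

/-- The affine reflection `s_{α,k} : v ↦ v - ((v|α) - k)α^∨`, as a function. -/
def sAffFun (α : V) (k : ℝ) (v : V) : V := v - (⟪v, α⟫ - k) • coroot α

theorem sAffFun_involutive (α : V) (k : ℝ) : Function.Involutive (sAffFun α k) := by
  intro v
  by_cases h : α = 0
  · simp [sAffFun, coroot, h]
  · have h2 : ⟪α, α⟫ ≠ 0 := by
      intro hz
      exact h (inner_self_eq_zero.mp hz)
    have hr : ⟪coroot α, α⟫ = 2 := by
      simp only [coroot, real_inner_smul_left]
      field_simp
    simp only [sAffFun, inner_sub_left, real_inner_smul_left, hr]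
    have : ⟪v, α⟫ - (⟪v, α⟫ - k) * 2 - k = -(⟪v, α⟫ - k) := by ring
    rw [this, neg_smul, sub_neg_eq_add, sub_add_cancel]

/-- The affine reflection `s_{α,k}` as a permutation of `V`. -/
def sAff (α : V) (k : ℝ) : Equiv.Perm V :=
  Function.Involutive.toPerm _ (sAffFun_involutive α k)

/-- The translation `Tr(x) : v ↦ v + x`, as a function. -/
def trFun (x : V) (v : V) : V := v + x

/-- The translation `Tr(x) : v ↦ v + x`, as a permutation of `V`. -/
def trPerm (x : V) : Equiv.Perm V := Equiv.addRight x

/-- A crystallographic (reduced) root system in a Euclidean space `V`. -/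
structure IsCrystRootSystem (Φ : Set V) : Prop where
  finite : Φ.Finite
  nonempty : Φ.Nonempty
  ne_zero : ∀ α ∈ Φ, α ≠ 0
  spanning : Submodule.span ℝ Φ = ⊤
  refl_mem : ∀ α ∈ Φ, ∀ β ∈ Φ, sAffFun α 0 β ∈ Φ
  reduced : ∀ α ∈ Φ, ∀ c : ℝ, c • α ∈ Φ → c = 1 ∨ c = -1
  cryst : ∀ α ∈ Φ, ∀ β ∈ Φ, ∃ n : ℤ, 2 * ⟪β, α⟫ / ⟪α, α⟫ = (n : ℝ)

/-- The (finite) Weyl group of `Φ`, generated by the reflections `s_α`. -/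
def WeylGroup (Φ : Set V) : Subgroup (Equiv.Perm V) :=
  Subgroup.closure {g | ∃ α ∈ Φ, g = sAff α 0}

/-- The affine Weyl group of `Φ`, generated by all affine reflections `s_{α,k}`, `k ∈ ℤ`. -/
def AffWeylGroup (Φ : Set V) : Subgroup (Equiv.Perm V) :=
  Subgroup.closure {g | ∃ α ∈ Φ, ∃ k : ℤ, g = sAff α k}

/-- The set of reflections of the affine Weyl group. -/
def AffReflections (Φ : Set V) : Set (Equiv.Perm V) :=
  {g | ∃ α ∈ Φ, ∃ k : ℤ, g = sAff α k}

/-- The coweight lattice `P(Φ^∨) = {x | (x|α) ∈ ℤ for all α ∈ Φ}`. -/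
def coweightLattice (Φ : Set V) : Set V :=
  {x | ∀ α ∈ Φ, ∃ n : ℤ, ⟪x, α⟫ = (n : ℝ)}

/-- `Φ` is irreducible: it admits no decomposition into two nonempty orthogonal parts. -/
def IsIrreducibleRS (Φ : Set V) : Prop :=
  ∀ Φ₁ Φ₂ : Set V, Φ₁ ∪ Φ₂ = Φ → (∀ α ∈ Φ₁, ∀ β ∈ Φ₂, ⟪α, β⟫ = 0) →
    Φ₁ = ∅ ∨ Φ₂ = ∅

/-!
Choose `p` with `(p|αᵢ) = lᵢ` and put `m = l' - lⱼ`, where `αⱼ` is the repeated root. Let `L` be the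
lattice generated by the coroots of all roots as long as `αⱼ`; it is stable under the linear
reflections and contains `αⱼ^∨`. The reflections `s_{αᵢ,lᵢ}` fix `p`, while `s_{αⱼ,l'}` moves `p` by
`m αⱼ^∨`, so every generator preserves `p + mL`. Hence so does `W`, and as `W` contains the
translations by all coroots, `β^∨ ∈ mL` for every root `β`.

Taking `β` as long as `αⱼ` gives `L ⊆ mL ⊆ m²L`, so pairing `αⱼ^∨` with `αⱼ` shows `m² ∣ 2`. Taking
`β` arbitrary gives `β^∨ ∈ L`. With `c = (αⱼ|αⱼ)`, every vector of `L` has squared length an integer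
multiple of `4/c`, so `4/(β|β) ≥ 4/c`.

The same stabilizer argument, applied to the span of the `αᵢ` in place of `p + mL`, shows that the
`αᵢ` span `V`, which is what makes `p` exist.
-/

section

open scoped Pointwise

theorem exists_forall_inner_eq {ι : Type*} [Finite ι] (b : Module.Basis ι ℝ V) (r : ι → ℝ) :
    ∃ p : V, ∀ i, ⟪p, b i⟫ = r i := by
  have : FiniteDimensional ℝ V := b.finiteDimensional_of_finite
  refine ⟨(InnerProductSpace.toDual ℝ V).symm (b.constr ℝ r).toContinuousLinearMap, fun i => ?_⟩
  rw [InnerProductSpace.toDual_symm_apply, LinearMap.coe_toContinuousLinearMap', b.constr_basis]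

theorem sub_inner_smul_coroot_eq_reflection (α v : V) :
    v - ⟪v, α⟫ • coroot α = (ℝ ∙ α)ᗮ.reflection v := by
  rw [Submodule.reflection_orthogonal_apply, Submodule.reflection_singleton_apply, neg_sub,
    real_inner_comm, coroot, smul_smul, two_smul, ← add_smul]
  simp only [RCLike.ofReal_real_eq_id, id, real_inner_self_eq_norm_sq]
  congr 2
  ring

theorem sAffFun_zero_eq_reflection (α v : V) : sAffFun α 0 v = (ℝ ∙ α)ᗮ.reflection v := by
  rw [sAffFun, sub_zero, sub_inner_smul_coroot_eq_reflection]

theorem sAff_apply (α : V) (k : ℝ) (v : V) :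
    sAff α k v = v - (⟪v, α⟫ - k) • coroot α :=
  rfl

theorem sAff_apply_add (α p y : V) (k : ℝ) :
    sAff α k (p + y) = p + ((ℝ ∙ α)ᗮ.reflection y + (k - ⟪p, α⟫) • coroot α) := by
  rw [← sub_inner_smul_coroot_eq_reflection, sAff_apply, inner_add_left]
  module

theorem sAff_one_sAff_zero_apply (β p : V) : sAff β 1 (sAff β 0 p) = p + coroot β := by
  have translate : sAff β 1 (sAff β 0 p) = sAff β 0 (sAff β 0 p) + coroot β := by
    rw [sAff_apply β 1, sAff_apply β 0 (sAff β 0 p)]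
    module
  rw [translate]
  exact congrArg (· + coroot β) (sAffFun_involutive β 0 p)

theorem inner_coroot_self {α : V} (hα : α ≠ 0) : ⟪coroot α, α⟫ = 2 := by
  rw [coroot, real_inner_smul_left, div_mul_cancel₀ _ (inner_self_ne_zero.mpr hα)]

theorem inner_coroot_coroot_self (α : V) : ⟪coroot α, coroot α⟫ = 4 / ⟪α, α⟫ := by
  rcases eq_or_ne α 0 with rfl | hα
  · simp [coroot]
  · nth_rewrite 2 [coroot]
    rw [real_inner_smul_right, inner_coroot_self hα]
    ring

theorem IsCrystRootSystem.coroot_mem_coweightLattice {Φ : Set V} (hΦ : IsCrystRootSystem Φ) :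
    ∀ α ∈ Φ, coroot α ∈ coweightLattice Φ := by
  intro α hα β hβ
  obtain ⟨z, hz⟩ := hΦ.cryst α hα β hβ
  exact ⟨z, by rw [← hz, coroot, real_inner_smul_left, real_inner_comm α β, div_mul_eq_mul_div]⟩

theorem map_coroot {E : Type*} [NormedAddCommGroup E] [InnerProductSpace ℝ E] (f : V →ₗᵢ[ℝ] E)
    (α : V) : f (coroot α) = coroot (f α) := by
  rw [coroot, coroot, map_smul, f.inner_map_map]

theorem sAff_mem_stabilizer_coset {M : AddSubgroup V} {α p : V} {k : ℝ}
    (hrefl : ∀ y ∈ M, (ℝ ∙ α)ᗮ.reflection y ∈ M) (hp : (k - ⟪p, α⟫) • coroot α ∈ M) :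
    sAff α k ∈ MulAction.stabilizer (Equiv.Perm V) (p +ᵥ (M : Set V)) := by
  have maps : ∀ v ∈ p +ᵥ (M : Set V), sAff α k v ∈ p +ᵥ (M : Set V) := by
    rintro _ ⟨y, hy, rfl⟩
    exact ⟨_, add_mem (hrefl y hy) hp, (sAff_apply_add α p y k).symm⟩
  refine MulAction.mem_stabilizer_set.mpr fun v => ⟨fun hv => ?_, maps v⟩
  exact sAffFun_involutive α k v ▸ maps _ hv

theorem coroot_mem_of_affWeylGroup_le_stabilizer {Φ : Set V} {M : AddSubgroup V} {p : V}
    (hW : AffWeylGroup Φ ≤ MulAction.stabilizer (Equiv.Perm V) (p +ᵥ (M : Set V)))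
    {β : V} (hβ : β ∈ Φ) : coroot β ∈ M := by
  have refl_mem (k : ℤ) : sAff β k ∈ AffWeylGroup Φ := Subgroup.subset_closure ⟨β, hβ, k, rfl⟩
  have hp : p ∈ p +ᵥ (M : Set V) := ⟨0, zero_mem M, add_zero p⟩
  obtain ⟨y, hy, hpy⟩ : sAff β 1 (sAff β 0 p) ∈ p +ᵥ (M : Set V) := by
    simpa using (MulAction.mem_stabilizer_set.mp (hW (mul_mem (refl_mem 1) (refl_mem 0))) p).mpr hp
  rw [sAff_one_sAff_zero_apply] at hpy
  rwa [← add_left_cancel hpy]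

theorem span_range_eq_top_of_affWeylGroup_le {Φ : Set V} (hspan : Submodule.span ℝ Φ = ⊤)
    {ι : Type*} {α : ι → V} {T : Set (Equiv.Perm V)} (hT : ∀ g ∈ T, ∃ i k, g = sAff (α i) k)
    (hW : AffWeylGroup Φ ≤ Subgroup.closure T) : Submodule.span ℝ (Set.range α) = ⊤ := by
  set U := Submodule.span ℝ (Set.range α)
  have hα (i : ι) (r : ℝ) : r • coroot (α i) ∈ U :=
    U.smul_mem _ (U.smul_mem _ (Submodule.subset_span ⟨i, rfl⟩))
  have gen_le : Subgroup.closure T ≤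
      MulAction.stabilizer (Equiv.Perm V) ((0 : V) +ᵥ (U.toAddSubgroup : Set V)) := by
    refine (Subgroup.closure_le _).mpr fun g hg => ?_
    obtain ⟨i, k, rfl⟩ := hT g hg
    refine sAff_mem_stabilizer_coset (fun y hy => ?_) (hα i _)
    rw [← sub_inner_smul_coroot_eq_reflection]
    exact U.sub_mem hy (hα i _)
  have root_mem : Φ ⊆ U := fun β hβ => by
    rcases eq_or_ne β 0 with rfl | hβ₀
    · exact U.zero_mem
    have hscale : 2 / ⟪β, β⟫ ≠ 0 := div_ne_zero two_ne_zero (inner_self_ne_zero.mpr hβ₀)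
    refine (U.smul_mem_iff hscale).mp ?_
    exact coroot_mem_of_affWeylGroup_le_stabilizer (hW.trans gen_le) hβ
  exact top_le_iff.mp (hspan ▸ Submodule.span_le.mpr root_mem)

theorem exists_forall_inner_eq_of_affWeylGroup_le {Φ : Set V} (hspan : Submodule.span ℝ Φ = ⊤)
    {ι : Type*} [Fintype ι] (hcard : Fintype.card ι = Module.finrank ℝ V) {α : ι → V}
    {T : Set (Equiv.Perm V)} (hT : ∀ g ∈ T, ∃ i k, g = sAff (α i) k)
    (hW : AffWeylGroup Φ ≤ Subgroup.closure T) (r : ι → ℝ) : ∃ p : V, ∀ i, ⟪p, α i⟫ = r i := by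
  have hα : Submodule.span ℝ (Set.range α) = ⊤ := span_range_eq_top_of_affWeylGroup_le hspan hT hW
  simpa using exists_forall_inner_eq (basisOfTopLeSpanOfCardEqFinrank α hα.ge hcard) r

/-- The sublattice of the coroot lattice of `Φ` generated by the coroots of the roots of squared
length `c`. -/
def corootSublattice (Φ : Set V) (c : ℝ) : AddSubgroup V :=
  AddSubgroup.closure (coroot '' {γ ∈ Φ | ⟪γ, γ⟫ = c})

section CorootSublattice

variable {Φ : Set V} {c : ℝ}

theorem coroot_mem_corootSublattice {γ : V} (hγ : γ ∈ Φ) :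
    coroot γ ∈ corootSublattice Φ ⟪γ, γ⟫ :=
  AddSubgroup.subset_closure ⟨γ, ⟨hγ, rfl⟩, rfl⟩

theorem corootSublattice_subset_coweightLattice
    (hcryst : ∀ α ∈ Φ, coroot α ∈ coweightLattice Φ) :
    (corootSublattice Φ c : Set V) ⊆ coweightLattice Φ := by
  intro x hx β hβ
  induction hx using AddSubgroup.closure_induction with
  | mem x hx =>
    obtain ⟨γ, ⟨hγ, -⟩, rfl⟩ := hx
    exact hcryst γ hγ β hβ
  | zero => exact ⟨0, by simp⟩
  | add x y _ _ hx hy =>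
    obtain ⟨⟨a, ha⟩, b, hb⟩ := hx, hy
    exact ⟨a + b, by rw [inner_add_left, ha, hb, Int.cast_add]⟩
  | neg x _ hx =>
    obtain ⟨a, ha⟩ := hx
    exact ⟨-a, by rw [inner_neg_left, ha, Int.cast_neg]⟩

theorem reflection_mem_corootSublattice (hrefl : ∀ α ∈ Φ, ∀ β ∈ Φ, sAffFun α 0 β ∈ Φ)
    {α x : V} (hα : α ∈ Φ) (hx : x ∈ corootSublattice Φ c) :
    (ℝ ∙ α)ᗮ.reflection x ∈ corootSublattice Φ c := by
  let s := (ℝ ∙ α)ᗮ.reflection.toLinearIsometry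
  suffices h : corootSublattice Φ c ≤ (corootSublattice Φ c).comap s.toLinearMap.toAddMonoidHom from
    h hx
  refine (AddSubgroup.closure_le _).mpr ?_
  rintro _ ⟨γ, ⟨hγ, hc⟩, rfl⟩
  have root_mem : s γ ∈ Φ := sAffFun_zero_eq_reflection α γ ▸ hrefl α hα γ hγ
  have length_eq : ⟪s γ, s γ⟫ = c := (s.inner_map_map γ γ).trans hc
  exact AddSubgroup.subset_closure ⟨s γ, ⟨root_mem, length_eq⟩, (map_coroot s γ).symm⟩

theorem exists_int_mul_inner_corootSublattice
    (hcryst : ∀ α ∈ Φ, coroot α ∈ coweightLattice Φ)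
    {x y : V} (hx : x ∈ corootSublattice Φ c) (hy : y ∈ corootSublattice Φ c) :
    ∃ z : ℤ, c * ⟪x, y⟫ = 2 * z := by
  induction hy using AddSubgroup.closure_induction with
  | mem y hy =>
    obtain ⟨γ, ⟨hγ, rfl⟩, rfl⟩ := hy
    obtain ⟨z, hz⟩ := corootSublattice_subset_coweightLattice hcryst hx γ hγ
    rcases eq_or_ne γ 0 with rfl | hγ₀
    · exact ⟨0, by simp⟩
    · refine ⟨z, ?_⟩
      rw [coroot, real_inner_smul_right, ← mul_assoc,
        mul_div_cancel₀ _ (inner_self_ne_zero.mpr hγ₀), hz]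
  | zero => exact ⟨0, by simp⟩
  | add y y' _ _ hy hy' =>
    obtain ⟨⟨a, ha⟩, b, hb⟩ := hy, hy'
    exact ⟨a + b, by rw [inner_add_right, mul_add, ha, hb, Int.cast_add, mul_add]⟩
  | neg y _ hy =>
    obtain ⟨a, ha⟩ := hy
    exact ⟨-a, by rw [inner_neg_right, mul_neg, ha, Int.cast_neg, mul_neg]⟩

theorem exists_int_mul_inner_self_corootSublattice
    (hcryst : ∀ α ∈ Φ, coroot α ∈ coweightLattice Φ)
    {x : V} (hx : x ∈ corootSublattice Φ c) : ∃ z : ℤ, c * ⟪x, x⟫ = 4 * z := by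
  induction hx using AddSubgroup.closure_induction with
  | mem x hx =>
    obtain ⟨γ, ⟨-, rfl⟩, rfl⟩ := hx
    rcases eq_or_ne γ 0 with rfl | hγ₀
    · exact ⟨0, by simp⟩
    · refine ⟨1, ?_⟩
      rw [inner_coroot_coroot_self, mul_div_cancel₀ _ (inner_self_ne_zero.mpr hγ₀), Int.cast_one,
        mul_one]
  | zero => exact ⟨0, by simp⟩
  | add x y hx hy hxx hyy =>
    obtain ⟨⟨a, ha⟩, b, hb⟩ := hxx, hyy
    obtain ⟨d, hd⟩ := exists_int_mul_inner_corootSublattice hcryst hx hy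
    refine ⟨a + b + d, ?_⟩
    rw [real_inner_add_add_self]
    push_cast
    linear_combination ha + hb + 2 * hd
  | neg x _ hx => simpa only [inner_neg_neg] using hx

theorem inner_self_le_of_coroot_mem_corootSublattice
    (hcryst : ∀ α ∈ Φ, coroot α ∈ coweightLattice Φ) (hc : 0 < c)
    {γ : V} (hγ : coroot γ ∈ corootSublattice Φ c) : ⟪γ, γ⟫ ≤ c := by
  rcases (real_inner_self_nonneg (x := γ)).eq_or_lt with hzero | hpos
  · exact hzero ▸ hc.le
  obtain ⟨z, hz⟩ := exists_int_mul_inner_self_corootSublattice hcryst hγ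
  have hcz : c = z * ⟪γ, γ⟫ := by
    rw [inner_coroot_coroot_self] at hz
    field_simp at hz
    rw [hz, mul_comm]
  have hz_one : (1 : ℝ) ≤ z := by
    exact_mod_cast Int.cast_pos.mp (pos_of_mul_pos_left (hcz ▸ hc) hpos.le)
  exact hcz ▸ le_mul_of_one_le_left hpos.le hz_one

theorem isUnit_of_corootSublattice_le_smul
    (hcryst : ∀ α ∈ Φ, coroot α ∈ coweightLattice Φ)
    {α : V} (hα : α ∈ Φ) (hα₀ : α ≠ 0) {m : ℤ}
    (hm : corootSublattice Φ ⟪α, α⟫ ≤ m • corootSublattice Φ ⟪α, α⟫) : IsUnit m := by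
  obtain ⟨y, hy, hαy⟩ := hm (coroot_mem_corootSublattice hα)
  obtain ⟨w, hw, rfl⟩ := hm hy
  obtain ⟨z, hz⟩ := corootSublattice_subset_coweightLattice hcryst hw α hα
  have two_eq : (m * m * z : ℝ) = 2 := by
    rw [← inner_coroot_self hα₀, ← hαy, ← hz]
    simp [← Int.cast_smul_eq_zsmul ℝ, real_inner_smul_left, mul_assoc]
  exact Int.prime_two.squarefree m ⟨z, by exact_mod_cast two_eq.symm⟩

end CorootSublattice

theorem coroot_mem_smul_corootSublattice {Φ : Set V}
    (hspan : Submodule.span ℝ Φ = ⊤) (hrefl : ∀ α ∈ Φ, ∀ β ∈ Φ, sAffFun α 0 β ∈ Φ)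
    {ι : Type*} [Fintype ι] (hcard : Fintype.card ι = Module.finrank ℝ V)
    {α : ι → V} (hα : ∀ i, α i ∈ Φ) {l : ι → ℤ} {j : ι} {l' : ℤ}
    (hW : AffWeylGroup Φ ≤ Subgroup.closure
      ((Set.range fun i => sAff (α i) (l i : ℝ)) ∪ {sAff (α j) (l' : ℝ)}))
    {β : V} (hβ : β ∈ Φ) :
    coroot β ∈ (l' - l j) • corootSublattice Φ ⟪α j, α j⟫ := by
  obtain ⟨p, hp⟩ : ∃ p : V, ∀ i, ⟪p, α i⟫ = l i := by
    refine exists_forall_inner_eq_of_affWeylGroup_le hspan hcard ?_ hW (l · : ι → ℝ)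
    rintro g (⟨i, rfl⟩ | rfl)
    exacts [⟨i, _, rfl⟩, ⟨j, _, rfl⟩]
  set M := (l' - l j) • corootSublattice Φ ⟪α j, α j⟫
  have reflection_mem (i : ι) : ∀ y ∈ M, (ℝ ∙ α i)ᗮ.reflection y ∈ M := by
    rintro _ ⟨x, hx, rfl⟩
    exact ⟨_, reflection_mem_corootSublattice hrefl (hα i) hx, (map_zsmul _ _ x).symm⟩
  refine coroot_mem_of_affWeylGroup_le_stabilizer (p := p)
    (hW.trans ((Subgroup.closure_le _).mpr ?_)) hβ
  rintro g (⟨i, rfl⟩ | rfl)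
  · exact sAff_mem_stabilizer_coset (reflection_mem i) (by simp [hp])
  · refine sAff_mem_stabilizer_coset (reflection_mem j) ?_
    rw [hp, ← Int.cast_sub, Int.cast_smul_eq_zsmul]
    exact AddSubgroup.smul_mem_pointwise_smul _ _ _ (coroot_mem_corootSublattice (hα j))

theorem statement_17_general {Φ : Set V} (hne : ∀ α ∈ Φ, α ≠ 0)
    (hspan : Submodule.span ℝ Φ = ⊤) (hrefl : ∀ α ∈ Φ, ∀ β ∈ Φ, sAffFun α 0 β ∈ Φ)
    (hcryst : ∀ α ∈ Φ, coroot α ∈ coweightLattice Φ)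
    {ι : Type*} [Fintype ι] (hcard : Fintype.card ι = Module.finrank ℝ V)
    {α : ι → V} (hα : ∀ i, α i ∈ Φ) {l : ι → ℤ} {j : ι} {l' : ℤ}
    (hgen : AffWeylGroup Φ = Subgroup.closure
      ((Set.range fun i => sAff (α i) (l i : ℝ)) ∪ {sAff (α j) (l' : ℝ)})) :
    |l' - l j| = 1 ∧ ∀ γ ∈ Φ, ⟪γ, γ⟫ ≤ ⟪α j, α j⟫ := by
  have coroot_mem {β : V} (hβ : β ∈ Φ) :
      coroot β ∈ (l' - l j) • corootSublattice Φ ⟪α j, α j⟫ :=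
    coroot_mem_smul_corootSublattice hspan hrefl hcard hα hgen.le hβ
  have hαj : α j ≠ 0 := hne _ (hα j)
  constructor
  · refine Int.isUnit_iff_abs_eq.mp (isUnit_of_corootSublattice_le_smul hcryst (hα j) hαj ?_)
    refine (AddSubgroup.closure_le _).mpr ?_
    rintro _ ⟨γ, ⟨hγ, -⟩, rfl⟩
    exact coroot_mem hγ
  · intro γ hγ
    obtain ⟨y, hy, hγy⟩ := coroot_mem hγ
    refine inner_self_le_of_coroot_mem_corootSublattice hcryst (real_inner_self_pos.mpr hαj) ?_
    exact hγy ▸ zsmul_mem hy _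

end

theorem statement_17 (Φ : Set V) (hΦ : IsCrystRootSystem Φ) (hirr : IsIrreducibleRS Φ)
    (n : ℕ) (hn : 0 < n) (hrank : Module.finrank ℝ V = n)
    (α : Fin n → V) (hα : ∀ i, α i ∈ Φ) (l : Fin n → ℤ) (l' : ℤ)
    (hgen : AffWeylGroup Φ = Subgroup.closure
      ((Set.range fun i => sAff (α i) (l i : ℝ)) ∪ {sAff (α ⟨n - 1, by omega⟩) (l' : ℝ)})) :
    |l' - l ⟨n - 1, by omega⟩| = 1 ∧
    (∀ a b : ℝ, a < b → (∀ γ ∈ Φ, ⟪γ, γ⟫ = a ∨ ⟪γ, γ⟫ = b) →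
      (∃ γ ∈ Φ, ⟪γ, γ⟫ = a) → (∃ γ ∈ Φ, ⟪γ, γ⟫ = b) →
      ⟪α ⟨n - 1, by omega⟩, α ⟨n - 1, by omega⟩⟫ = b) := by
  obtain ⟨habs, hlong⟩ := statement_17_general hΦ.ne_zero hΦ.spanning hΦ.refl_mem
    hΦ.coroot_mem_coweightLattice (by rw [Fintype.card_fin, hrank]) hα hgen
  refine ⟨habs, fun a b hab hlen _ ⟨γ, hγ, hγb⟩ => (hlen _ (hα _)).resolve_left fun ha => ?_⟩
  exact (hab.trans_le (hγb ▸ hlong γ hγ)).ne' ha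

end
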